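/- Let (i,j) ∈ E be an edge of a finite connected simple graph G, with lazy parameters α_u = 1/(ρ_u+1) for u ∈ {i,j}, α_min = min{α_i,α_j}, α_max = max{α_i,α_j}, Δ_ij(α) = α_max − α_min, and α_⋆ = α_min if c_OR-0(i,j) ≥ 0 and α_⋆ = α_max otherwise. Then c_OR(i,j) ≥ (1−α_⋆)·(−[𝔎(i,j) − Z_max(i,j) − 𝒮(i,j)]₊ − [𝔎(i,j) − Z_min(i,j) − 𝒮(i,j)]₊ + Z_max(i,j)) − Δ_ij(α), where [x]₊ = max{0,x}. -/

import Mathlib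

namespace Curv

open Finset

noncomputable section

variable {V : Type*} [Fintype V] [DecidableEq V] (G : SimpleGraph V) [DecidableRel G.Adj]

/-- `μ` is a probability distribution on the (finite) vertex set. -/
def IsProb (μ : V → ℝ) : Prop := (∀ x, 0 ≤ μ x) ∧ ∑ x, μ x = 1

/-- `π` is a coupling of `μ` and `ν`. -/
def IsCoupling (μ ν : V → ℝ) (π : V → V → ℝ) : Prop :=
  (∀ x y, 0 ≤ π x y) ∧ (∀ x, ∑ y, π x y = μ x) ∧ (∀ y, ∑ x, π x y = ν y)

/-- Transport cost of a plan `π` with respect to the shortest-path graph distance. -/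
def cost (π : V → V → ℝ) : ℝ := ∑ x, ∑ y, (G.dist x y : ℝ) * π x y

/-- Wasserstein-1 distance between two distributions on the vertex set. -/
def W1 (μ ν : V → ℝ) : ℝ := sInf {c : ℝ | ∃ π, IsCoupling μ ν π ∧ cost G π = c}

/-- Dirac mass at `u`. -/
def dirac (u : V) : V → ℝ := fun x => if x = u then 1 else 0

/-- Uniform distribution on the neighbours of `u`. -/
def unif (u : V) : V → ℝ := fun x => if G.Adj u x then ((G.degree u : ℝ))⁻¹ else 0

/-- Lazy random-walk measure with laziness parameter `α`. -/
def mGen (α : ℝ) (u : V) : V → ℝ := fun x => α * dirac u x + (1 - α) * unif G u x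

/-- Canonical laziness `1/(deg u + 1)`. -/
def alphaL (u : V) : ℝ := ((G.degree u : ℝ) + 1)⁻¹

/-- The lazy random-walk measure `m_u`. -/
def mLazy (u : V) : V → ℝ := mGen G (alphaL G u) u

/-- Ollivier–Ricci curvature (lazy). -/
def cOR (i j : V) : ℝ := 1 - W1 G (mLazy G i) (mLazy G j)

/-- Non-lazy Ollivier–Ricci curvature. -/
def cOR0 (i j : V) : ℝ := 1 - W1 G (unif G i) (unif G j)

/-- Positive part `[x]₊`. -/
def pos (x : ℝ) : ℝ := max x 0

/-- Triangle count `△(u,v)`. -/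
def tri (u v : V) : ℕ := (G.neighborFinset u ∩ G.neighborFinset v).card

/-- Unique neighbours `N(u) \ (N(v) ∪ {v})`. -/
def uniq (u v : V) : Finset V := G.neighborFinset u \ insert v (G.neighborFinset v)

/-- `ξ_u(u,v)`: unique neighbours of `u` having a neighbour among unique neighbours of `v`. -/
def xiSet (u v : V) : Finset V := (uniq G u v).filter fun k => ∃ w ∈ uniq G v u, G.Adj k w

/-- `Ξ_uv`. -/
def Xi (u v : V) : ℕ := (xiSet G u v).card + (xiSet G v u).card

/-- `□̃(k,u,v) = |N(k) ∩ (N(v)\(N(u)∪{u}))|`. -/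
def boxT (k u v : V) : ℕ := (G.neighborFinset k ∩ uniq G v u).card

/-- `ϖ_max(u,v)`. -/
def varpi (u v : V) : ℕ :=
  max (((G.neighborFinset u).erase v).sup fun k => boxT G k u v)
      (((G.neighborFinset v).erase u).sup fun w => boxT G w v u)

/-- `þ_max(u,v) = ϖ_max(u,v)·max{ρ_u,ρ_v}`. -/
def thMax (u v : V) : ℕ := varpi G u v * max (G.degree u) (G.degree v)

/-- Edgewise 4-cycle coefficient `C₄(u,v)`. -/
def C4 (u v : V) : ℝ := if 0 < Xi G u v then (Xi G u v : ℝ) / (thMax G u v : ℝ) else 0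

/-- Graph-wide 4-cycle constant `C₄(G)`. -/
def C4Graph : ℝ := sSup {x : ℝ | ∃ u v, G.Adj u v ∧ x = C4 G u v}

def rhoMin (i j : V) : ℕ := min (G.degree i) (G.degree j)

def rhoMax (i j : V) : ℕ := max (G.degree i) (G.degree j)

/-- `𝔖(i,j)`. -/
def frakS (i j : V) : ℝ := 2 / (G.degree i : ℝ) + 2 / (G.degree j : ℝ) - 2

/-- `𝔗(i,j)`. -/
def frakT (i j : V) : ℝ := 2 / (rhoMax G i j : ℝ) + 1 / (rhoMin G i j : ℝ)

/-- `𝔎(i,j)`. -/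
def frakK (i j : V) : ℝ := 1 - 1 / (rhoMin G i j : ℝ) - 1 / (rhoMax G i j : ℝ)

/-- `Z_min(i,j)`. -/
def Zmin (i j : V) : ℝ := (tri G i j : ℝ) / (rhoMin G i j : ℝ)

/-- `Z_max(i,j)`. -/
def Zmax (i j : V) : ℝ := (tri G i j : ℝ) / (rhoMax G i j : ℝ)

/-- Balanced Forman curvature. -/
def cBF (i j : V) : ℝ :=
  if rhoMin G i j = 1 then 0
  else frakS G i j + frakT G i j * (tri G i j : ℝ) + C4 G i j

/-- `M` is a matching in the cross-edge bipartite graph `B_ij`. -/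
def IsCrossMatching (i j : V) (M : Finset (V × V)) : Prop :=
  (∀ p ∈ M, p.1 ∈ uniq G i j ∧ p.2 ∈ uniq G j i ∧ G.Adj p.1 p.2) ∧
  (∀ p ∈ M, ∀ q ∈ M, p ≠ q → p.1 ≠ q.1 ∧ p.2 ≠ q.2)

/-- Maximum matching size `𝔪(i,j)` in the cross-edge bipartite graph. -/
def matchNum (i j : V) : ℕ :=
  sSup {n : ℕ | ∃ M : Finset (V × V), IsCrossMatching G i j M ∧ M.card = n}

/-- `𝒮(i,j) = 𝔪(i,j)/ρ_max`. -/
def SS (i j : V) : ℝ := (matchNum G i j : ℝ) / (rhoMax G i j : ℝ)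

/-- Lazy per-neighbour weight `w_u = (1-α)/ρ_u`. -/
def wA (α : ℝ) (u : V) : ℝ := (1 - α) / (G.degree u : ℝ)

/-- Lazy conductance sum `Σ`. -/
def SigmaA (αi αj : ℝ) (i j : V) : ℝ :=
  (G.degree i : ℝ) / (1 - αi) + (G.degree j : ℝ) / (1 - αj)

/-- `Const_α`. -/
def ConstA (αi αj : ℝ) (i j : V) : ℝ :=
  -1 + 2 * (min αi ((1 - αj) / (G.degree j : ℝ)) + min αj ((1 - αi) / (G.degree i : ℝ)))
    + (pos (αi - (1 - αj) / (G.degree j : ℝ)) + pos ((1 - αj) / (G.degree j : ℝ) - αi)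
      + pos (αj - (1 - αi) / (G.degree i : ℝ)) + pos ((1 - αi) / (G.degree i : ℝ) - αj))
    + ((G.degree i : ℝ) + (G.degree j : ℝ) - 2) / SigmaA G αi αj i j

/-- `Slope_α`. -/
def SlopeA (αi αj : ℝ) (i j : V) : ℝ := wA G αi i + wA G αj j - 2 / SigmaA G αi αj i j

/-- `α_⋆`: `α_min` when the non-lazy curvature is nonnegative, `α_max` otherwise. -/
def alphaStar (i j : V) : ℝ :=
  if 0 ≤ cOR0 G i j then min (alphaL G i) (alphaL G j) else max (alphaL G i) (alphaL G j)

/-- `Δ_ij(α) = α_max − α_min` for the canonical laziness. -/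
def DeltaL (i j : V) : ℝ := max (alphaL G i) (alphaL G j) - min (alphaL G i) (alphaL G j)

/-!
Send all mass from `m_i` to `m_j` through one of the two endpoints, say `j` with `ρ_i ≤ ρ_j`. Any
partial plan that moves mass directly instead saves, on each pair `(x, y)`, the length of the
detour through `j`. Take the plan moving mass `1 / (ρ_j + 1)` along each pair `(x, x)` with `x` in
both closed neighbourhoods and along each edge of a maximum cross matching: it saves
`2 dist(x, j)` on a pair of the first kind and `2` on one of the second kind, so that
`c_OR(i,j) ≥ -2 + (△ + 3) α_max + (2𝔪 + 2△ + 3) α_min`. By `(1 - α_u) / ρ_u = α_u`, the difference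
between this bound and the claimed one, positive parts removed, is a sum of two nonnegative terms
for every `α` between `α_min` and `α_max`.
-/

/-- The extra length of the route from `x` to `y` through `o` compared with a geodesic: twice the
Gromov product of `x` and `y` based at `o`. -/
def detour {X : Type*} (H : SimpleGraph X) (o x y : X) : ℝ :=
  H.dist x o + H.dist o y - H.dist x y

theorem detour_nonneg {X : Type*} {H : SimpleGraph X} {o x : X} (hx : H.Reachable x o) (y : X) :
    0 ≤ detour H o x y :=
  sub_nonneg.2 (by exact_mod_cast hx.dist_triangle_left y)

section Transport

variable {X : Type*} [Fintype X] (H : SimpleGraph X) {μ ν : X → ℝ} {κ π : X → X → ℝ}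

theorem cost_nonneg (hπ : ∀ x y, 0 ≤ π x y) : 0 ≤ cost H π :=
  sum_nonneg fun x _ => sum_nonneg fun y _ => mul_nonneg (Nat.cast_nonneg _) (hπ x y)

theorem W1_le_cost (hπ : IsCoupling μ ν π) : W1 H μ ν ≤ cost H π :=
  csInf_le ⟨0, by rintro _ ⟨σ, hσ, rfl⟩; exact cost_nonneg H hσ.1⟩ ⟨π, hπ, rfl⟩

theorem IsCoupling.flip (hπ : IsCoupling μ ν π) : IsCoupling ν μ (flip π) :=
  ⟨fun x y => hπ.1 y x, hπ.2.2, hπ.2.1⟩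

theorem cost_flip (π : X → X → ℝ) : cost H (flip π) = cost H π := by
  unfold cost flip
  rw [sum_comm]
  simp only [H.dist_comm]

theorem W1_comm (μ ν : X → ℝ) : W1 H μ ν = W1 H ν μ := by
  unfold W1
  congr 1
  ext c
  constructor <;> rintro ⟨π, hπ, rfl⟩ <;> exact ⟨flip π, hπ.flip, cost_flip H π⟩

theorem IsCoupling.sum_add_mul (hπ : IsCoupling μ ν π) (f g : X → ℝ) :
    ∑ x, ∑ y, (f x + g y) * π x y = ∑ x, f x * μ x + ∑ y, g y * ν y := by
  simp only [add_mul, sum_add_distrib, ← mul_sum, hπ.2.1]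
  rw [sum_comm (f := fun x y => g y * π x y)]
  simp only [← mul_sum, hπ.2.2]

theorem IsCoupling.pos_left (hπ : IsCoupling μ ν π) {x y : X} (hxy : 0 < π x y) : 0 < μ x :=
  hπ.2.1 x ▸ hxy.trans_le (single_le_sum (fun z _ => hπ.1 x z) (mem_univ y))

theorem isCoupling_mul_div_sum (hμ : ∀ x, 0 ≤ μ x) (hν : ∀ y, 0 ≤ ν y)
    (hmass : ∑ x, μ x = ∑ y, ν y) : IsCoupling μ ν fun x y => μ x * ν y / ∑ z, μ z := by
  -- Total mass `0` is not an exception: then `ξ = 0`, and `0 / 0 = 0`.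
  have mul_mass_div {ξ : X → ℝ} (hξ : ∀ x, 0 ≤ ξ x) (x : X) :
      ξ x * (∑ z, ξ z) / ∑ z, ξ z = ξ x :=
    mul_div_cancel_of_imp fun h0 =>
      (sum_eq_zero_iff_of_nonneg fun x _ => hξ x).1 h0 x (mem_univ x)
  refine ⟨fun x y => div_nonneg (mul_nonneg (hμ x) (hν y)) (sum_nonneg fun z _ => hμ z),
    fun x => ?_, fun y => ?_⟩
  · rw [← sum_div, ← mul_sum, ← hmass, mul_mass_div hμ]
  · rw [← sum_div, ← sum_mul, mul_comm, hmass, mul_mass_div hν]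

/-- A partial transport plan: `κ` ships at most `μ x` out of each `x` and at most `ν y` into
each `y`. -/
structure IsSubcoupling (μ ν : X → ℝ) (κ : X → X → ℝ) : Prop where
  nonneg : ∀ x y, 0 ≤ κ x y
  row_le : ∀ x, ∑ y, κ x y ≤ μ x
  col_le : ∀ y, ∑ x, κ x y ≤ ν y

theorem IsSubcoupling.exists_isCoupling_ge (hκ : IsSubcoupling μ ν κ)
    (hmass : ∑ x, μ x = ∑ y, ν y) : ∃ π, IsCoupling μ ν π ∧ ∀ x y, κ x y ≤ π x y := by
  have residual_mass : ∑ x, (μ x - ∑ y, κ x y) = ∑ y, (ν y - ∑ x, κ x y) := by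
    rw [sum_sub_distrib, sum_sub_distrib, hmass, sum_comm]
  obtain ⟨σ_nonneg, σ_row, σ_col⟩ := isCoupling_mul_div_sum
    (fun x => sub_nonneg.2 (hκ.row_le x)) (fun y => sub_nonneg.2 (hκ.col_le y)) residual_mass
  refine ⟨fun x y => κ x y + _, ⟨fun x y => add_nonneg (hκ.nonneg x y) (σ_nonneg x y),
    fun x => ?_, fun y => ?_⟩, fun x y => le_add_of_nonneg_right (σ_nonneg x y)⟩
  · rw [sum_add_distrib, σ_row, add_sub_cancel]
  · rw [sum_add_distrib, σ_col, add_sub_cancel]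

/- Route all mass through `o`; whatever `κ` moves directly saves its detour. -/
theorem IsSubcoupling.W1_le (hκ : IsSubcoupling μ ν κ) (hmass : ∑ x, μ x = ∑ y, ν y) {o : X}
    (ho : ∀ x, 0 < μ x → H.Reachable x o) :
    W1 H μ ν ≤ ∑ x, (H.dist x o : ℝ) * μ x + ∑ y, (H.dist o y : ℝ) * ν y
      - ∑ x, ∑ y, detour H o x y * κ x y := by
  obtain ⟨π, hπ, hκπ⟩ := hκ.exists_isCoupling_ge hmass
  have detour_mul_le (x y : X) : detour H o x y * κ x y ≤ detour H o x y * π x y := by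
    rcases (hπ.1 x y).eq_or_lt with hπ0 | hπ_pos
    · rw [← hπ0, le_antisymm (hπ0 ▸ hκπ x y) (hκ.nonneg x y)]
    · exact mul_le_mul_of_nonneg_left (hκπ x y) (detour_nonneg (ho x (hπ.pos_left hπ_pos)) y)
  calc W1 H μ ν
      ≤ cost H π := W1_le_cost H hπ
    _ = ∑ x, ∑ y, ((H.dist x o : ℝ) + H.dist o y) * π x y
          - ∑ x, ∑ y, detour H o x y * π x y := by
        simp only [cost, detour, ← sum_sub_distrib, ← sub_mul, sub_sub_cancel]
    _ ≤ _ := by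
        rw [hπ.sum_add_mul]
        exact sub_le_sub_left (sum_le_sum fun x _ => sum_le_sum fun y _ => detour_mul_le x y) _

variable [DecidableEq X] {P : Finset (X × X)} {β : ℝ}

/-- The plan moving mass `β` along each pair of `P`. -/
def pairPlan (P : Finset (X × X)) (β : ℝ) (x y : X) : ℝ := if (x, y) ∈ P then β else 0

theorem sum_mul_pairPlan (P : Finset (X × X)) (β : ℝ) (g : X → X → ℝ) :
    ∑ x, ∑ y, g x y * pairPlan P β x y = β * ∑ p ∈ P, g p.1 p.2 := by
  simp only [pairPlan, ← Fintype.sum_prod_type', mul_ite, mul_zero, sum_ite_mem, univ_inter,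
    mul_sum, mul_comm]

theorem sum_pairPlan_le (hμ : ∀ x, 0 ≤ μ x) (hfst : Set.InjOn Prod.fst (P : Set (X × X)))
    (hβμ : ∀ p ∈ P, β ≤ μ p.1) (x : X) : ∑ y, pairPlan P β x y ≤ μ x := by
  by_cases hx : ∃ y, (x, y) ∈ P
  · obtain ⟨y, hy⟩ := hx
    have unique_target (z : X) (hz : z ≠ y) : pairPlan P β x z = 0 :=
      if_neg fun hxz => hz (Prod.mk_right_injective x (hfst hxz hy rfl))
    rw [Fintype.sum_eq_single y unique_target, pairPlan, if_pos hy]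
    exact hβμ _ hy
  · have no_target (y : X) : pairPlan P β x y = 0 := if_neg fun hy => hx ⟨y, hy⟩
    simpa only [no_target, sum_const_zero] using hμ x

theorem isSubcoupling_pairPlan (hμ : ∀ x, 0 ≤ μ x) (hν : ∀ y, 0 ≤ ν y) (hβ : 0 ≤ β)
    (hfst : Set.InjOn Prod.fst (P : Set (X × X))) (hsnd : Set.InjOn Prod.snd (P : Set (X × X)))
    (hβμ : ∀ p ∈ P, β ≤ μ p.1) (hβν : ∀ p ∈ P, β ≤ ν p.2) :
    IsSubcoupling μ ν (pairPlan P β) where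
  nonneg x y := by unfold pairPlan; split_ifs <;> simp [hβ]
  row_le := sum_pairPlan_le hμ hfst hβμ
  col_le y := by
    have hfst_swap : Set.InjOn Prod.fst (P.image Prod.swap : Set (X × X)) := by
      rw [coe_image]
      exact Set.InjOn.image_of_comp hsnd
    have hβν_swap : ∀ p ∈ P.image Prod.swap, β ≤ ν p.1 := forall_mem_image.2 hβν
    simpa [pairPlan] using sum_pairPlan_le hν hfst_swap hβν_swap y

end Transport

section Laziness

variable {X : Type*} [Fintype X] (H : SimpleGraph X) [DecidableRel H.Adj]

theorem alphaL_nonneg (u : X) : 0 ≤ alphaL H u := by unfold alphaL; positivity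

theorem alphaL_le_one (u : X) : alphaL H u ≤ 1 :=
  inv_le_one_of_one_le₀ (le_add_of_nonneg_left (Nat.cast_nonneg _))

theorem antitone_inv_natCast_add_one : Antitone fun n : ℕ => ((n : ℝ) + 1)⁻¹ :=
  fun _ _ hmn => inv_anti₀ (by positivity) (by gcongr)

theorem max_alphaL (u v : X) : max (alphaL H u) (alphaL H v) = ((rhoMin H u v : ℝ) + 1)⁻¹ :=
  antitone_inv_natCast_add_one.map_min.symm

theorem min_alphaL (u v : X) : min (alphaL H u) (alphaL H v) = ((rhoMax H u v : ℝ) + 1)⁻¹ :=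
  antitone_inv_natCast_add_one.map_max.symm

theorem alphaStar_mem_Icc (u v : X) :
    alphaStar H u v ∈ Set.Icc (min (alphaL H u) (alphaL H v)) (max (alphaL H u) (alphaL H v)) := by
  unfold alphaStar
  split_ifs
  exacts [Set.left_mem_Icc.2 min_le_max, Set.right_mem_Icc.2 min_le_max]

end Laziness

section LazyWalk

/-- The closed neighbourhood `N(u) ∪ {u}`, the support of `mLazy G u`. -/
def closedNbhd (u : V) : Finset V := insert u (G.neighborFinset u)

variable {G} in
theorem mem_closedNbhd {u x : V} : x ∈ closedNbhd G u ↔ x = u ∨ G.Adj u x := by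
  simp [closedNbhd]

theorem self_mem_closedNbhd (u : V) : u ∈ closedNbhd G u := mem_insert_self _ _

theorem card_closedNbhd (u : V) : #(closedNbhd G u) = G.degree u + 1 := by
  rw [closedNbhd, card_insert_of_notMem (G.notMem_neighborFinset_self u),
    G.card_neighborFinset_eq_degree]

variable {G} in
theorem reachable_of_mem_closedNbhd {u x : V} (hx : x ∈ closedNbhd G u) : G.Reachable x u := by
  rcases mem_closedNbhd.1 hx with rfl | hux
  · rfl
  · exact hux.symm.reachable

variable {G} in
theorem dist_of_mem_closedNbhd {u x : V} (hx : x ∈ closedNbhd G u) :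
    (G.dist x u : ℝ) = 1 - if x = u then 1 else 0 := by
  rcases mem_closedNbhd.1 hx with rfl | hux
  · simp
  · simp [hux.ne', SimpleGraph.dist_eq_one_iff_adj.2 hux.symm]

theorem card_closedNbhd_inter {i j : V} (hij : G.Adj i j) :
    #(closedNbhd G i ∩ closedNbhd G j) = tri G i j + 2 := by
  have inter_eq : closedNbhd G i ∩ closedNbhd G j =
      insert i (insert j (G.neighborFinset i ∩ G.neighborFinset j)) := by
    ext x
    have := hij.symm
    simp only [mem_inter, mem_closedNbhd, mem_insert, G.mem_neighborFinset]
    grind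
  rw [inter_eq, card_insert_of_notMem (by simp [hij.ne]), card_insert_of_notMem (by simp), tri]

theorem card_closedNbhd_mul_alphaL (u : V) : (#(closedNbhd G u) : ℝ) * alphaL G u = 1 := by
  rw [card_closedNbhd, alphaL, Nat.cast_succ]
  exact mul_inv_cancel₀ (by positivity)

theorem mLazy_apply (u x : V) :
    mLazy G u x = if x ∈ closedNbhd G u then alphaL G u else 0 := by
  by_cases hxu : x = u
  · subst hxu
    simp [mLazy, mGen, dirac, unif, self_mem_closedNbhd]
  by_cases hux : G.Adj u x
  · have degree_pos : (0 : ℝ) < G.degree u :=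
      Nat.cast_pos.2 ((G.degree_pos_iff_exists_adj u).2 ⟨x, hux⟩)
    simp only [mLazy, mGen, dirac, unif, alphaL, mem_closedNbhd, hxu, hux, or_true, if_true,
      if_false]
    field_simp
    ring
  · simp [mLazy, mGen, dirac, unif, mem_closedNbhd, hxu, hux]

theorem sum_mul_mLazy (u : V) (f : V → ℝ) :
    ∑ x, f x * mLazy G u x = (∑ x ∈ closedNbhd G u, f x) * alphaL G u := by
  simp only [mLazy_apply, mul_ite, mul_zero, sum_ite_mem, univ_inter, sum_mul]

theorem mLazy_of_mem {u x : V} (hx : x ∈ closedNbhd G u) : mLazy G u x = alphaL G u := by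
  rw [mLazy_apply, if_pos hx]

theorem mem_closedNbhd_of_mLazy_pos {u x : V} (hx : 0 < mLazy G u x) : x ∈ closedNbhd G u := by
  by_contra hxu
  rw [mLazy_apply, if_neg hxu] at hx
  exact hx.false

theorem isProb_mLazy (u : V) : IsProb (mLazy G u) := by
  refine ⟨fun x => ?_, ?_⟩
  · rw [mLazy_apply]
    split_ifs
    exacts [alphaL_nonneg G u, le_rfl]
  · simpa [card_closedNbhd_mul_alphaL] using sum_mul_mLazy G u 1

theorem sum_dist_mul_mLazy_self (u : V) :
    ∑ x, (G.dist u x : ℝ) * mLazy G u x = 1 - alphaL G u := by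
  have sum_dist : ∑ x ∈ closedNbhd G u, (G.dist u x : ℝ) = #(closedNbhd G u) - 1 := by
    rw [sum_congr rfl fun x hx => G.dist_comm ▸ dist_of_mem_closedNbhd hx]
    simp [self_mem_closedNbhd]
  rw [sum_mul_mLazy, sum_dist, sub_mul, card_closedNbhd_mul_alphaL, one_mul]

end LazyWalk

section Edge

variable {G} {i j : V} {M : Finset (V × V)}

theorem dist_eq_two_of_mem_sdiff (hij : G.Adj i j) {x : V}
    (hx : x ∈ closedNbhd G i \ closedNbhd G j) : G.dist x j = 2 := by
  obtain ⟨hxi, hxj⟩ := mem_sdiff.1 hx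
  rw [mem_closedNbhd, not_or] at hxj
  have hix : G.Adj i x := (mem_closedNbhd.1 hxi).resolve_left fun h => hxj.2 (h ▸ hij.symm)
  have reachable : G.Reachable x j := hix.symm.reachable.trans hij.reachable
  exact le_antisymm (G.dist_le (.cons hix.symm (.cons hij .nil)))
    (reachable.one_lt_dist_of_ne_of_not_adj hxj.1 fun h => hxj.2 h.symm)

theorem sum_dist_inter (hij : G.Adj i j) :
    ∑ x ∈ closedNbhd G i ∩ closedNbhd G j, (G.dist x j : ℝ) = tri G i j + 1 := by
  have j_mem : j ∈ closedNbhd G i ∩ closedNbhd G j :=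
    mem_inter.2 ⟨mem_closedNbhd.2 (.inr hij), self_mem_closedNbhd G j⟩
  rw [sum_congr rfl fun x hx => dist_of_mem_closedNbhd (mem_inter.1 hx).2]
  simp only [sum_sub_distrib, sum_const, nsmul_one, sum_ite_eq', j_mem, if_true,
    card_closedNbhd_inter G hij]
  push_cast
  ring

theorem sum_dist_mul_mLazy_of_adj (hij : G.Adj i j) :
    ∑ x, (G.dist x j : ℝ) * mLazy G i x = 2 - (tri G i j + 3) * alphaL G i := by
  have sum_dist_sdiff : ∑ x ∈ closedNbhd G i \ closedNbhd G j, (G.dist x j : ℝ) =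
      2 * (#(closedNbhd G i) - (tri G i j + 2)) := by
    rw [sum_congr rfl fun x hx => congrArg Nat.cast (dist_eq_two_of_mem_sdiff hij hx)]
    have card_split := card_sdiff_add_card_inter (closedNbhd G i) (closedNbhd G j)
    rw [card_closedNbhd_inter G hij] at card_split
    rw [← card_split, sum_const, nsmul_eq_mul]
    push_cast
    ring
  rw [sum_mul_mLazy, ← sum_inter_add_sum_sdiff _ (closedNbhd G j), sum_dist_inter hij,
    sum_dist_sdiff]
  linear_combination 2 * card_closedNbhd_mul_alphaL G i

variable (G i j M) in
/-- The pairs along which mass is moved directly: vertices near both `i` and `j` keep their mass,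
and the edges of the cross matching `M` carry mass from the side of `i` to that of `j`. -/
def directPairs : Finset (V × V) := (closedNbhd G i ∩ closedNbhd G j).diag ∪ M

theorem IsCrossMatching.fst_mem_sdiff (hM : IsCrossMatching G i j M) {p : V × V} (hp : p ∈ M) :
    p.1 ∈ closedNbhd G i \ closedNbhd G j :=
  sdiff_subset_sdiff (subset_insert _ _) subset_rfl (hM.1 p hp).1

theorem IsCrossMatching.snd_mem_sdiff (hM : IsCrossMatching G i j M) {p : V × V} (hp : p ∈ M) :
    p.2 ∈ closedNbhd G j \ closedNbhd G i :=
  sdiff_subset_sdiff (subset_insert _ _) subset_rfl (hM.1 p hp).2.1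

theorem IsCrossMatching.disjoint_diag (hM : IsCrossMatching G i j M) :
    Disjoint (closedNbhd G i ∩ closedNbhd G j).diag M := by
  refine disjoint_left.2 fun p hp hpM => (mem_sdiff.1 (hM.fst_mem_sdiff hpM)).2 ?_
  exact (mem_inter.1 (mem_diag.1 hp).1).2

theorem IsCrossMatching.fst_mem_of_mem_directPairs (hM : IsCrossMatching G i j M) {p : V × V}
    (hp : p ∈ directPairs G i j M) : p.1 ∈ closedNbhd G i := by
  rcases mem_union.1 hp with hp | hp
  · exact (mem_inter.1 (mem_diag.1 hp).1).1
  · exact (mem_sdiff.1 (hM.fst_mem_sdiff hp)).1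

theorem IsCrossMatching.snd_mem_of_mem_directPairs (hM : IsCrossMatching G i j M) {p : V × V}
    (hp : p ∈ directPairs G i j M) : p.2 ∈ closedNbhd G j := by
  rcases mem_union.1 hp with hp | hp
  · exact (mem_diag.1 hp).2 ▸ (mem_inter.1 (mem_diag.1 hp).1).2
  · exact (mem_sdiff.1 (hM.snd_mem_sdiff hp)).1

theorem IsCrossMatching.injOn_fst_directPairs (hM : IsCrossMatching G i j M) :
    Set.InjOn Prod.fst (directPairs G i j M : Set (V × V)) := by
  rw [directPairs, coe_union, Set.injOn_union (disjoint_coe.2 hM.disjoint_diag)]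
  refine ⟨fun p hp q hq hpq => ?_, fun p hp q hq hpq => ?_, fun p hp q hq hpq => ?_⟩
  · have hp := (mem_diag.1 hp).2
    have hq := (mem_diag.1 hq).2
    exact Prod.ext hpq (hp ▸ hq ▸ hpq)
  · by_contra hne
    exact (hM.2 p hp q hq hne).1 hpq
  · exact (mem_sdiff.1 (hM.fst_mem_sdiff hq)).2 (hpq ▸ (mem_inter.1 (mem_diag.1 hp).1).2)

theorem IsCrossMatching.injOn_snd_directPairs (hM : IsCrossMatching G i j M) :
    Set.InjOn Prod.snd (directPairs G i j M : Set (V × V)) := by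
  rw [directPairs, coe_union, Set.injOn_union (disjoint_coe.2 hM.disjoint_diag)]
  refine ⟨fun p hp q hq hpq => ?_, fun p hp q hq hpq => ?_, fun p hp q hq hpq => ?_⟩
  · have hp := (mem_diag.1 hp).2
    have hq := (mem_diag.1 hq).2
    exact Prod.ext (hp ▸ hq ▸ hpq) hpq
  · by_contra hne
    exact (hM.2 p hp q hq hne).2 hpq
  · have hp := mem_diag.1 hp
    exact (mem_sdiff.1 (hM.snd_mem_sdiff hq)).2 (hpq ▸ hp.2 ▸ (mem_inter.1 hp.1).1)

theorem IsCrossMatching.sum_detour_directPairs (hM : IsCrossMatching G i j M) (hij : G.Adj i j) :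
    ∑ p ∈ directPairs G i j M, detour G j p.1 p.2 = 2 * (tri G i j + 1) + 2 * #M := by
  have detour_self (x : V) : detour G j x x = 2 * G.dist x j := by
    rw [detour, G.dist_comm (u := j), G.dist_self]
    ring
  have detour_matched (p : V × V) (hp : p ∈ M) : detour G j p.1 p.2 = 2 := by
    have hj2 : G.Adj j p.2 := by simpa using (mem_sdiff.1 (hM.1 p hp).2.1).1
    rw [detour, dist_eq_two_of_mem_sdiff hij (hM.fst_mem_sdiff hp),
      SimpleGraph.dist_eq_one_iff_adj.2 hj2, SimpleGraph.dist_eq_one_iff_adj.2 (hM.1 p hp).2.2]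
    norm_num
  rw [directPairs, sum_union hM.disjoint_diag, sum_diag, sum_congr rfl detour_matched]
  simp only [detour_self, ← mul_sum, sum_dist_inter hij, sum_const, nsmul_eq_mul, mul_comm]

theorem IsCrossMatching.W1_mLazy_le (hM : IsCrossMatching G i j M) (hij : G.Adj i j)
    (hα : alphaL G j ≤ alphaL G i) :
    W1 G (mLazy G i) (mLazy G j) ≤
      3 - (tri G i j + 3) * alphaL G i - (2 * #M + 2 * tri G i j + 3) * alphaL G j := by
  have hprob := isProb_mLazy G
  have direct : IsSubcoupling (mLazy G i) (mLazy G j)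
      (pairPlan (directPairs G i j M) (alphaL G j)) :=
    isSubcoupling_pairPlan (hprob i).1 (hprob j).1 (alphaL_nonneg G j)
      hM.injOn_fst_directPairs hM.injOn_snd_directPairs
      (fun p hp => (mLazy_of_mem G (hM.fst_mem_of_mem_directPairs hp)).symm ▸ hα)
      (fun p hp => (mLazy_of_mem G (hM.snd_mem_of_mem_directPairs hp)).ge)
  have reachable (x : V) (hx : 0 < mLazy G i x) : G.Reachable x j :=
    (reachable_of_mem_closedNbhd (mem_closedNbhd_of_mLazy_pos G hx)).trans hij.reachable
  calc W1 G (mLazy G i) (mLazy G j)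
      ≤ _ := direct.W1_le G ((hprob i).2.trans (hprob j).2.symm) reachable
    _ = (2 - (tri G i j + 3) * alphaL G i) + (1 - alphaL G j)
          - alphaL G j * (2 * (tri G i j + 1) + 2 * #M) := by
        rw [sum_dist_mul_mLazy_of_adj hij, sum_dist_mul_mLazy_self, sum_mul_pairPlan,
          hM.sum_detour_directPairs hij]
    _ = _ := by ring

theorem IsCrossMatching.swap (hM : IsCrossMatching G i j M) :
    IsCrossMatching G j i (M.image Prod.swap) := by
  constructor
  · simp only [forall_mem_image, Prod.fst_swap, Prod.snd_swap]
    exact fun p hp => ⟨(hM.1 p hp).2.1, (hM.1 p hp).1, (hM.1 p hp).2.2.symm⟩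
  · simp only [forall_mem_image, Prod.fst_swap, Prod.snd_swap, Prod.swap_injective.ne_iff]
    exact fun p hp q hq hpq => (hM.2 p hp q hq hpq).symm

variable (G i j) in
theorem bddAbove_card_isCrossMatching :
    BddAbove {n : ℕ | ∃ M : Finset (V × V), IsCrossMatching G i j M ∧ #M = n} :=
  ⟨Fintype.card (V × V), by rintro _ ⟨M, -, rfl⟩; exact card_le_univ M⟩

theorem IsCrossMatching.card_le_matchNum (hM : IsCrossMatching G i j M) :
    #M ≤ matchNum G i j :=
  le_csSup (bddAbove_card_isCrossMatching G i j) ⟨M, hM, rfl⟩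

variable (G i j)

theorem exists_isCrossMatching_card_eq_matchNum :
    ∃ M, IsCrossMatching G i j M ∧ #M = matchNum G i j :=
  have empty : IsCrossMatching G i j ∅ := by simp [IsCrossMatching]
  Nat.sSup_mem (s := {n | ∃ M, IsCrossMatching G i j M ∧ #M = n}) ⟨0, ∅, empty, card_empty⟩
    (bddAbove_card_isCrossMatching G i j)

theorem matchNum_le_swap : matchNum G i j ≤ matchNum G j i := by
  obtain ⟨M, hM, hcard⟩ := exists_isCrossMatching_card_eq_matchNum G i j
  rw [← hcard, ← card_image_of_injective M Prod.swap_injective]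
  exact hM.swap.card_le_matchNum

theorem matchNum_comm : matchNum G i j = matchNum G j i :=
  (matchNum_le_swap G i j).antisymm (matchNum_le_swap G j i)

theorem tri_comm : tri G i j = tri G j i := by rw [tri, tri, inter_comm]

theorem cOR_comm : cOR G i j = cOR G j i := by rw [cOR, cOR, W1_comm]

theorem neg_pos_sub_pos_add_Zmax_le :
    -(pos (frakK G i j - Zmax G i j - SS G i j))
        - pos (frakK G i j - Zmin G i j - SS G i j) + Zmax G i j ≤
      -2 + (tri G i j + 2) / rhoMin G i j
        + (2 * matchNum G i j + 2 * tri G i j + 2) / rhoMax G i j :=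
  calc _ ≤ -(frakK G i j - Zmax G i j - SS G i j)
          - (frakK G i j - Zmin G i j - SS G i j) + Zmax G i j := by
        gcongr <;> exact le_max_left _ _
    _ = _ := by
        unfold frakK Zmax Zmin SS
        ring

variable {G i j}

theorem tri_lt_degree (hij : G.Adj i j) : tri G i j < G.degree i := by
  rw [tri, ← G.card_neighborFinset_eq_degree]
  refine card_lt_card ⟨inter_subset_left, fun hsub => ?_⟩
  simpa using hsub ((G.mem_neighborFinset i j).2 hij)

theorem tri_lt_rhoMin (hij : G.Adj i j) : tri G i j < rhoMin G i j :=
  lt_min (tri_lt_degree hij) (tri_comm G i j ▸ tri_lt_degree hij.symm)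

theorem le_cOR (hij : G.Adj i j) :
    -2 + (tri G i j + 3) * max (alphaL G i) (alphaL G j)
      + (2 * matchNum G i j + 2 * tri G i j + 3) * min (alphaL G i) (alphaL G j) ≤ cOR G i j := by
  wlog hα : alphaL G j ≤ alphaL G i generalizing i j
  · rw [cOR_comm, tri_comm, matchNum_comm, max_comm, min_comm]
    exact this hij.symm (le_of_not_ge hα)
  obtain ⟨M, hM, hcard⟩ := exists_isCrossMatching_card_eq_matchNum G i j
  have hW1 := hM.W1_mLazy_le hij hα
  rw [hcard] at hW1
  rw [max_eq_left hα, min_eq_right hα, cOR]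
  linarith

theorem one_sub_mul_sub_le {a b t m c : ℝ} (ha : 0 < a) (hb : 0 < b) (hta : t + 2 ≤ 2 * a)
    (htm : 0 ≤ m + t + 1) (hc : c ∈ Set.Icc (b + 1)⁻¹ (a + 1)⁻¹) :
    (1 - c) * (-2 + (t + 2) / a + (2 * m + 2 * t + 2) / b) - ((a + 1)⁻¹ - (b + 1)⁻¹) ≤
      -2 + (t + 3) * (a + 1)⁻¹ + (2 * m + 2 * t + 3) * (b + 1)⁻¹ := by
  have gap : -2 + (t + 3) * (a + 1)⁻¹ + (2 * m + 2 * t + 3) * (b + 1)⁻¹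
      - ((1 - c) * (-2 + (t + 2) / a + (2 * m + 2 * t + 2) / b) - ((a + 1)⁻¹ - (b + 1)⁻¹))
      = ((a + 1)⁻¹ - c) * (2 * a - (t + 2)) / a + 2 * (c - (b + 1)⁻¹) * (m + t + 1) / b := by
    field_simp
    ring
  have left_nonneg : 0 ≤ ((a + 1)⁻¹ - c) * (2 * a - (t + 2)) / a :=
    div_nonneg (mul_nonneg (sub_nonneg.2 hc.2) (sub_nonneg.2 hta)) ha.le
  have right_nonneg : 0 ≤ 2 * (c - (b + 1)⁻¹) * (m + t + 1) / b :=
    div_nonneg (mul_nonneg (mul_nonneg zero_le_two (sub_nonneg.2 hc.1)) htm) hb.le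
  linarith

theorem stmt11_general (hij : G.Adj i j) {α : ℝ}
    (hα : α ∈ Set.Icc (min (alphaL G i) (alphaL G j)) (max (alphaL G i) (alphaL G j))) :
    cOR G i j ≥
      (1 - α) *
        (-(pos (frakK G i j - Zmax G i j - SS G i j))
          - pos (frakK G i j - Zmin G i j - SS G i j) + Zmax G i j)
      - DeltaL G i j := by
  have tri_add_one_le : (tri G i j : ℝ) + 1 ≤ rhoMin G i j := by
    exact_mod_cast tri_lt_rhoMin hij
  have tri_nonneg : (0 : ℝ) ≤ tri G i j := Nat.cast_nonneg _
  have rhoMin_le_rhoMax : (rhoMin G i j : ℝ) ≤ rhoMax G i j := Nat.cast_le.2 min_le_max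
  have one_sub_nonneg : 0 ≤ 1 - α :=
    sub_nonneg.2 (hα.2.trans (max_le (alphaL_le_one G i) (alphaL_le_one G j)))
  have lazy_bound := le_cOR hij
  rw [max_alphaL, min_alphaL] at hα lazy_bound
  rw [DeltaL, max_alphaL, min_alphaL]
  refine le_trans ?_ ((one_sub_mul_sub_le ?_ ?_ ?_ ?_ hα).trans lazy_bound)
  · exact sub_le_sub_right
      (mul_le_mul_of_nonneg_left (neg_pos_sub_pos_add_Zmax_le G i j) one_sub_nonneg) _
  · linarith
  · linarith
  · linarith
  · positivity

end Edge

/-- lazy extension of the quadrangle-augmented Jost–Liu bound. -/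
theorem stmt11 (hG : G.Connected) (i j : V) (hij : G.Adj i j) :
    cOR G i j ≥
      (1 - alphaStar G i j) *
        (-(pos (frakK G i j - Zmax G i j - SS G i j))
          - pos (frakK G i j - Zmin G i j - SS G i j) + Zmax G i j)
      - DeltaL G i j :=
  stmt11_general hij (alphaStar_mem_Icc G i j)

end

end Curv
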